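/- Let τ ∈ [0,1], n ≥ 1, let π be a partition of {1,…,n} and let B be a block of π. Let π' be the partition of {1,…,n+1} obtained from π by adding the element n+1 to the block B. Then m_{n+1}(A_{π'}) = (|B|·τ/((1−τ)+nτ)) · m_n(A_π), where |B| is the cardinality of B. -/

import Mathlib

open MeasureTheory

noncomputable section

/-- The circle `ℝ/ℤ`. -/
abbrev Circle1 : Type := AddCircle (1 : ℝ)

/-- The Pólya-urn type Markov kernel
`κ_n(x, ·) = ((1−τ)·λ + τ·Σ_{i=1}^n δ_{x_i}) / ((1−τ) + nτ)`. -/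
def urnKernel (τ : ℝ) {n : ℕ} (x : Fin n → Circle1) : Measure Circle1 :=
  (ENNReal.ofReal ((1 - τ) + n * τ))⁻¹ •
    (ENNReal.ofReal (1 - τ) • (volume : Measure Circle1)
      + ENNReal.ofReal τ • ∑ i : Fin n, Measure.dirac (x i))

/-- The urn measures: `m 1 = λ` and `m (n+1)` is the image of the measure–kernel
product `m n ⊗ κ_n` under `(x, y) ↦ (x_1, …, x_n, y)`.  (`m 0` is a dummy value.) -/
def urnMeasure (τ : ℝ) : (n : ℕ) → Measure (Fin n → Circle1)
  | 0 => Measure.dirac (fun i => i.elim0)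
  | 1 => (volume : Measure Circle1).map (fun y => fun _ : Fin 1 => y)
  | (n + 2) =>
      (urnMeasure τ (n + 1)).bind
        (fun x => (urnKernel τ x).map (Fin.snoc x))

/-- For a partition `π` of `{1,…,n}`, the set `A_π` of `x` with `x i = x j` iff `i`
and `j` lie in the same block of `π`. -/
def samePartSet {n : ℕ} (P : Finpartition (Finset.univ : Finset (Fin n))) :
    Set (Fin n → Circle1) :=
  {x | ∀ i j : Fin n, x i = x j ↔ ∃ B ∈ P.parts, i ∈ B ∧ j ∈ B}

/-!
Given `x ∈ A_π`, the extended point `(x, y)` lies in `A_π'` exactly when `y` is the common value of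
`x` on `B`, and `(x, y) ∉ A_π'` for every `y` if `x ∉ A_π`. The law `κ_n(x, ·)` gives that value
mass `|B|τ / ((1-τ) + nτ)`: the diffuse part `λ` does not charge it, and exactly `|B|` of the Dirac
masses sit on it. So `x ↦ κ_n(x, {y | (x, y) ∈ A_π'})` is a constant multiple of the indicator of
`A_π`, and integrating it against `m_n` gives the claim.
-/

theorem measurable_finSnoc {α : Type*} [MeasurableSpace α] (n : ℕ) :
    Measurable (Function.uncurry (Fin.snoc (n := n) (α := fun _ => α))) := by
  refine measurable_pi_iff.2 (Fin.lastCases ?_ fun i => ?_)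
  · simpa only [Function.uncurry_def, Fin.snoc_last] using measurable_snd
  · simp only [Function.uncurry_def, Fin.snoc_castSucc]
    exact (measurable_pi_apply i).comp measurable_fst

theorem measurable_map_of_measurable_uncurry {α β γ : Type*} [MeasurableSpace α]
    [MeasurableSpace β] [MeasurableSpace γ] {κ : α → Measure β} (hκ : Measurable κ)
    (hfin : ∀ a, IsFiniteMeasure (κ a)) {f : α → β → γ} (hf : Measurable (Function.uncurry f)) :
    Measurable fun a => (κ a).map (f a) := by
  refine Measure.measurable_of_measurable_coe _ fun s hs => ?_
  simp_rw [fun a => Measure.map_apply (hf.of_uncurry_left (x := a)) hs]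
  exact ProbabilityTheory.Kernel.measurable_kernel_prodMk_left_of_finite (κ := ⟨κ, hκ⟩) (hf hs) hfin

theorem nullSingletonClass_addCircle (T : ℝ) [Fact (0 < T)] :
    NullSingletonClass (volume : Measure (AddCircle T)) where
  measure_singleton x := by simpa using AddCircle.volume_closedBall T (x := x) 0

section UrnKernel

variable {n : ℕ} {τ : ℝ}

theorem urnKernel_normalizer_pos (hτ0 : 0 ≤ τ) (hn : 1 ≤ n) : 0 < (1 - τ) + n * τ := by
  have hn' : (1 : ℝ) ≤ n := by exact_mod_cast hn
  nlinarith

theorem measurable_urnKernel (τ : ℝ) :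
    Measurable (urnKernel τ : (Fin n → Circle1) → Measure Circle1) := by
  refine Measure.measurable_of_measurable_coe _ fun s hs => ?_
  simp only [urnKernel, Measure.smul_apply, Measure.add_apply, Measure.finsetSum_apply,
    Measure.dirac_apply' _ hs, smul_eq_mul]
  have (i : Fin n) :
      Measurable fun x : Fin n → Circle1 => s.indicator (1 : Circle1 → ENNReal) (x i) :=
    (measurable_one.indicator hs).comp (measurable_pi_apply i)
  fun_prop

theorem isProbabilityMeasure_urnKernel (hτ0 : 0 ≤ τ) (hτ1 : τ ≤ 1) (hn : 1 ≤ n)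
    (x : Fin n → Circle1) : IsProbabilityMeasure (urnKernel τ x) where
  measure_univ := by
    have hpos := urnKernel_normalizer_pos hτ0 hn
    have hmass : ENNReal.ofReal (1 - τ) + ENNReal.ofReal τ * n
        = ENNReal.ofReal ((1 - τ) + n * τ) := by
      rw [ENNReal.ofReal_add (sub_nonneg.2 hτ1) (by positivity), mul_comm (n : ℝ),
        ENNReal.ofReal_mul hτ0, ENNReal.ofReal_natCast]
    simp only [urnKernel, Measure.smul_apply, Measure.add_apply, Measure.finsetSum_apply,
      smul_eq_mul, measure_univ, mul_one, Finset.sum_const, Finset.card_univ, Fintype.card_fin,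
      nsmul_eq_mul, AddCircle.measure_univ, ENNReal.ofReal_one, hmass]
    exact ENNReal.inv_mul_cancel (ENNReal.ofReal_pos.2 hpos).ne' ENNReal.ofReal_ne_top

theorem urnKernel_singleton (hτ0 : 0 ≤ τ) (hn : 1 ≤ n) (x : Fin n → Circle1) (y : Circle1) :
    urnKernel τ x {y} =
      ENNReal.ofReal ((Finset.card {i | x i = y} : ℝ) * τ / ((1 - τ) + n * τ)) := by
  have := nullSingletonClass_addCircle 1
  have hdirac : ∑ i, Measure.dirac (x i) {y} = (Finset.card {i | x i = y} : ENNReal) := by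
    simp [Set.indicator_apply]
  rw [ENNReal.ofReal_div_of_pos (urnKernel_normalizer_pos hτ0 hn), mul_comm,
    ENNReal.ofReal_mul hτ0, ENNReal.ofReal_natCast, ENNReal.div_eq_inv_mul]
  simp only [urnKernel, Measure.smul_apply, Measure.add_apply, Measure.finsetSum_apply, hdirac,
    smul_eq_mul, measure_singleton, mul_zero, zero_add]

theorem urnMeasure_succ_apply (hτ0 : 0 ≤ τ) (hτ1 : τ ≤ 1) (hn : 1 ≤ n)
    {s : Set (Fin (n + 1) → Circle1)} (hs : MeasurableSet s) :
    urnMeasure τ (n + 1) s =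
      ∫⁻ x, urnKernel τ x {y | (Fin.snoc x y : Fin (n + 1) → Circle1) ∈ s} ∂urnMeasure τ n := by
  obtain ⟨k, rfl⟩ := Nat.exists_eq_add_of_le' hn
  have hsnoc := measurable_finSnoc (α := Circle1) (k + 1)
  have hκ := measurable_map_of_measurable_uncurry (measurable_urnKernel τ)
    (fun x => have := isProbabilityMeasure_urnKernel hτ0 hτ1 hn x; inferInstance) hsnoc
  rw [urnMeasure, Measure.bind_apply hs hκ.aemeasurable]
  exact lintegral_congr fun x => Measure.map_apply (hsnoc.of_uncurry_left) hs

end UrnKernel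

section SamePartSet

variable {n : ℕ} {P : Finpartition (Finset.univ : Finset (Fin n))} {x : Fin n → Circle1}

theorem mem_samePartSet_iff : x ∈ samePartSet P ↔ ∀ i j, x i = x j ↔ i ∈ P.part j := by
  simp only [samePartSet, Set.mem_ofPred_eq, Finpartition.mem_part_iff_exists]

theorem measurableSet_samePartSet (P : Finpartition (Finset.univ : Finset (Fin n))) :
    MeasurableSet (samePartSet P) := by
  refine Measurable.setOf (.forall fun i => .forall fun j => .iff ?_ measurable_const)
  exact (measurable_pi_apply i).eq (measurable_pi_apply j)

theorem eq_apply_iff_mem_of_mem_samePartSet (hx : x ∈ samePartSet P) {B : Finset (Fin n)}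
    (hB : B ∈ P.parts) {b : Fin n} (hb : b ∈ B) (i : Fin n) : x i = x b ↔ i ∈ B := by
  rw [mem_samePartSet_iff.1 hx, P.part_eq_of_mem hB hb]

end SamePartSet

theorem mem_part_comm {α : Type*} [DecidableEq α] {s : Finset α} {P : Finpartition s} {a b : α} :
    a ∈ P.part b ↔ b ∈ P.part a := by
  simp only [Finpartition.mem_part_iff_exists, and_comm]

/-- `P'` is the partition `π'` obtained from the partition `P` of `{1,…,n}` by adding the element
`n+1` to `B`: the old indices are embedded by `Fin.castSucc` and the new one is `Fin.last n`. -/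
def IsBlockExtension {n : ℕ} (P : Finpartition (Finset.univ : Finset (Fin n)))
    (B : Finset (Fin n)) (P' : Finpartition (Finset.univ : Finset (Fin (n + 1)))) : Prop :=
  P'.parts =
    insert (insert (Fin.last n) (B.map Fin.castSuccEmb))
      ((P.parts.erase B).image (Finset.map Fin.castSuccEmb))

namespace IsBlockExtension

variable {n : ℕ} {P : Finpartition (Finset.univ : Finset (Fin n))} {B : Finset (Fin n)}
  {P' : Finpartition (Finset.univ : Finset (Fin (n + 1)))} {x : Fin n → Circle1}

theorem insert_last_mem_parts (h : IsBlockExtension P B P') :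
    insert (Fin.last n) (B.map Fin.castSuccEmb) ∈ P'.parts :=
  h ▸ Finset.mem_insert_self _ _

theorem map_castSucc_mem_parts (h : IsBlockExtension P B P') {C : Finset (Fin n)}
    (hC : C ∈ P.parts) (hCB : C ≠ B) : C.map Fin.castSuccEmb ∈ P'.parts :=
  h ▸ Finset.mem_insert_of_mem
    (Finset.mem_image_of_mem _ (Finset.mem_erase.2 ⟨hCB, hC⟩))

theorem part_last (h : IsBlockExtension P B P') :
    P'.part (Fin.last n) = insert (Fin.last n) (B.map Fin.castSuccEmb) :=
  P'.part_eq_of_mem h.insert_last_mem_parts (Finset.mem_insert_self _ _)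

theorem castSucc_mem_part_last (h : IsBlockExtension P B P') (i : Fin n) :
    i.castSucc ∈ P'.part (Fin.last n) ↔ i ∈ B := by
  simp [h.part_last, Fin.castSucc_ne_last]

theorem castSucc_mem_part_castSucc (h : IsBlockExtension P B P') (i j : Fin n) :
    i.castSucc ∈ P'.part j.castSucc ↔ i ∈ P.part j := by
  by_cases hjB : P.part j = B
  · have hpart : P'.part j.castSucc = insert (Fin.last n) (B.map Fin.castSuccEmb) :=
      P'.part_eq_of_mem h.insert_last_mem_parts (by simp [← hjB])
    simp [hpart, hjB, Fin.castSucc_ne_last]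
  · have hpart : P'.part j.castSucc = (P.part j).map Fin.castSuccEmb :=
      P'.part_eq_of_mem (h.map_castSucc_mem_parts (P.part_mem.2 (Finset.mem_univ j)) hjB) (by simp)
    simp [hpart]

theorem snoc_mem_samePartSet_iff (h : IsBlockExtension P B P') (y : Circle1) :
    (Fin.snoc x y : Fin (n + 1) → Circle1) ∈ samePartSet P' ↔
      x ∈ samePartSet P ∧ ∀ i, x i = y ↔ i ∈ B := by
  simp [mem_samePartSet_iff, Fin.forall_fin_succ', h.castSucc_mem_part_last,
    h.castSucc_mem_part_castSucc, mem_part_comm (a := Fin.last n), forall_and, eq_comm (a := y)]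

theorem setOf_snoc_mem_samePartSet (h : IsBlockExtension P B P') (hB : B ∈ P.parts)
    (hx : x ∈ samePartSet P) {b : Fin n} (hb : b ∈ B) :
    {y | (Fin.snoc x y : Fin (n + 1) → Circle1) ∈ samePartSet P'} = {x b} := by
  ext y
  simp only [Set.mem_ofPred_eq, h.snoc_mem_samePartSet_iff, hx, true_and, Set.mem_singleton_iff]
  refine ⟨fun hy => ((hy b).2 hb).symm, ?_⟩
  rintro rfl
  exact eq_apply_iff_mem_of_mem_samePartSet hx hB hb

theorem urnKernel_snoc_mem_samePartSet (h : IsBlockExtension P B P') (hB : B ∈ P.parts) {τ : ℝ}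
    (hτ0 : 0 ≤ τ) (hn : 1 ≤ n) (x : Fin n → Circle1) :
    urnKernel τ x {y | (Fin.snoc x y : Fin (n + 1) → Circle1) ∈ samePartSet P'} =
      (samePartSet P).indicator
        (fun _ => ENNReal.ofReal ((B.card : ℝ) * τ / ((1 - τ) + n * τ))) x := by
  by_cases hx : x ∈ samePartSet P
  · obtain ⟨b, hb⟩ := P.nonempty_of_mem_parts hB
    have hcount : ({i | x i = x b} : Finset (Fin n)) = B := by
      ext i
      simpa using eq_apply_iff_mem_of_mem_samePartSet hx hB hb i
    rw [h.setOf_snoc_mem_samePartSet hB hx hb, urnKernel_singleton hτ0 hn, hcount,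
      Set.indicator_of_mem hx]
  · simp [h.snoc_mem_samePartSet_iff, hx]

end IsBlockExtension

/-- if `π'` is obtained from the partition `π` of `{1,…,n}` by adding the
element `n+1` to the block `B` of `π`, then
`m_{n+1}(A_{π'}) = (|B|·τ/((1−τ)+nτ)) · m_n(A_π)`. -/
theorem urnMeasure_extend_block (τ : ℝ) (hτ0 : 0 ≤ τ) (hτ1 : τ ≤ 1)
    (n : ℕ) (hn : 1 ≤ n)
    (P : Finpartition (Finset.univ : Finset (Fin n)))
    (B : Finset (Fin n)) (hB : B ∈ P.parts)
    (P' : Finpartition (Finset.univ : Finset (Fin (n + 1))))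
    (hP' : P'.parts =
      insert (insert (Fin.last n) (B.map Fin.castSuccEmb))
        ((P.parts.erase B).image (Finset.map Fin.castSuccEmb))) :
    urnMeasure τ (n + 1) (samePartSet P')
      = ENNReal.ofReal ((B.card : ℝ) * τ / ((1 - τ) + n * τ)) * urnMeasure τ n (samePartSet P) := by
  have hext : IsBlockExtension P B P' := hP'
  rw [urnMeasure_succ_apply hτ0 hτ1 hn (measurableSet_samePartSet P'),
    lintegral_congr (hext.urnKernel_snoc_mem_samePartSet hB hτ0 hn),
    lintegral_indicator_const (measurableSet_samePartSet P)]

end
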